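/- Let K be a field, k and α odd integers with k ≥ 2α + 3 and α ≥ 3, S = K[x₁,x₂,x₃], m = (x₁,x₂,x₃), and I = (x₁^k, x₂^k, x₃^k, x₁^α x₂^α x₃^α). Then the ideal I + m^{k+α−1} has the Rees property but is not m-full. -/

import Mathlib

/-!
Passing to the initial ideal, the Rees property becomes a statement about monomial ideals: every
upward closed set of exponents containing those of `L = I + m ^ (k + α - 1)` has at most as many
minimal elements as that of `L`. The monomials outside `I` of degree less than `k + α - 1` lie on
disjoint chains, each of which multiplies by one variable at a time and stays outside `I` up to
degree `k + α - 1`. Distinct minimal elements outside `I` are incomparable, hence lie on different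
chains and have different ends, and these ends are minimal generators of `L`.

If `L` were `m`-full, multiplication by some linear form `l` would be injective from degree
`k + α - 2` to degree `k + α - 1` of `S/I`, since `I` has no generator in degree `k + α - 1`.
Rescaling and permuting the variables preserves `I`, so we may take the first two coefficients of
`l` to be equal. Then `l` acts on the elements invariant under exchanging `x₁` and `x₂`, and a
parity count shows that this space has larger dimension in degree `k + α - 2` than in degree
`k + α - 1`.
-/

open MvPolynomial

/-- The minimal number of generators of an ideal. -/
noncomputable def mu {R : Type*} [CommRing R] (I : Ideal R) : ℕ :=
  sInf {k | ∃ s : Finset R, s.card = k ∧ Ideal.span (s : Set R) = I}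

/-- The graded maximal ideal `(x₁, …, xₙ)` of `K[x₁, …, xₙ]`. -/
noncomputable def mm (K : Type*) [Field K] (n : ℕ) : Ideal (MvPolynomial (Fin n) K) :=
  Ideal.span (Set.range X)

/-- `I` is `m`-full: `mI : y = I` for some `y ∈ m`. -/
def IsMFull {R : Type*} [CommRing R] (m I : Ideal R) : Prop :=
  ∃ y ∈ m, (m * I).colon (Ideal.span {y}) = I

/-- A homogeneous ideal: one containing all homogeneous components of its elements. -/
def IsHomog {K : Type*} [Field K] {n : ℕ} (I : Ideal (MvPolynomial (Fin n) K)) : Prop :=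
  ∀ f ∈ I, ∀ k : ℕ, homogeneousComponent k f ∈ I

/-- `dim_K (S/I)_k`, the dimension of the degree `k` part of `S/I`. -/
noncomputable def hdim (K : Type*) [Field K] (n : ℕ)
    (I : Ideal (MvPolynomial (Fin n) K)) (k : ℕ) : ℕ :=
  Module.finrank K (Submodule.map (Ideal.Quotient.mkₐ K I).toLinearMap
    (homogeneousSubmodule (Fin n) K k))

theorem mu_eq_spanFinrank {R : Type*} [CommRing R] (I : Ideal R) : mu I = I.spanFinrank := by
  rw [Submodule.spanFinrank_eq_iInf, iInf, mu]
  congr 1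
  ext n
  simp only [Set.mem_ofPred_eq, Set.mem_range, Subtype.exists, exists_prop]
  exact exists_congr fun s => and_comm

theorem mm_eq_idealOfVars (K : Type*) [Field K] (n : ℕ) : mm K n = idealOfVars (Fin n) K :=
  rfl

section MonomialIdeal

variable {σ R : Type*} [CommSemiring R]

theorem mem_restrictSupportIdeal {E : Set (σ →₀ ℕ)} {hE : IsUpperSet E} {f : MvPolynomial σ R} :
    f ∈ restrictSupportIdeal R E hE ↔ ∀ u ∈ f.support, u ∈ E :=
  Iff.rfl

theorem monomial_mem_restrictSupportIdeal {E : Set (σ →₀ ℕ)} (hE : IsUpperSet E)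
    {u : σ →₀ ℕ} (hu : u ∈ E) (c : R) : monomial u c ∈ restrictSupportIdeal R E hE :=
  (monomial_mem_restrictSupport R).2 (Or.inl hu)

theorem restrictSupportIdeal_mono {E F : Set (σ →₀ ℕ)} (hE : IsUpperSet E) (hF : IsUpperSet F)
    (h : E ⊆ F) : restrictSupportIdeal R E hE ≤ restrictSupportIdeal R F hF :=
  restrictSupport_mono R h

theorem restrictSupportIdeal_union {E F : Set (σ →₀ ℕ)} (hE : IsUpperSet E) (hF : IsUpperSet F) :
    restrictSupportIdeal R (E ∪ F) (hE.union hF) =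
      restrictSupportIdeal R E hE ⊔ restrictSupportIdeal R F hF := by
  refine le_antisymm (fun f hf => ?_) (sup_le
    (restrictSupportIdeal_mono _ _ Set.subset_union_left)
    (restrictSupportIdeal_mono _ _ Set.subset_union_right))
  rw [f.as_sum]
  refine sum_mem fun u hu => (mem_restrictSupportIdeal.1 hf u hu).elim (fun h => ?_) fun h => ?_
  · exact Ideal.mem_sup_left (monomial_mem_restrictSupportIdeal hE h _)
  · exact Ideal.mem_sup_right (monomial_mem_restrictSupportIdeal hF h _)

theorem monomial_mem_idealOfVars_mul_of_not_minimal {E : Set (σ →₀ ℕ)} (hE : IsUpperSet E)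
    {u : σ →₀ ℕ} (hu : u ∈ E) (hmin : ¬ Minimal (· ∈ E) u) (c : R) :
    monomial u c ∈ idealOfVars σ R * restrictSupportIdeal R E hE := by
  obtain ⟨v, hvu, hv⟩ := (not_minimal_iff_exists_lt hu).1 hmin
  have hw : monomial (u - v) c ∈ idealOfVars σ R := by
    rw [idealOfVars_eq_restrictSupportIdeal]
    refine monomial_mem_restrictSupportIdeal _ ?_ c
    rw [Set.mem_preimage, Set.mem_Ici, Nat.one_le_iff_ne_zero, Ne, Finsupp.degree_eq_zero_iff]
    exact (tsub_pos_of_lt hvu).ne'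
  have hmul := Ideal.mul_mem_mul hw (monomial_mem_restrictSupportIdeal hE hv (1 : R))
  rwa [monomial_mul, tsub_add_cancel_of_le hvu.le, mul_one] at hmul

theorem coeff_mul_of_minimal {E : Set (σ →₀ ℕ)} {hE : IsUpperSet E}
    {u : σ →₀ ℕ} (hu : Minimal (· ∈ E) u) (p : MvPolynomial σ R) {f : MvPolynomial σ R}
    (hf : f ∈ restrictSupportIdeal R E hE) :
    coeff u (p * f) = constantCoeff p * coeff u f := by
  classical
  rw [coeff_mul, Finset.sum_eq_single (0, u), constantCoeff_eq]
  · rintro ⟨a, b⟩ hab hne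
    rw [Finset.HasAntidiagonal.mem_antidiagonal] at hab
    refine mul_eq_zero_of_right _ (notMem_support_iff.1 fun hb => hne ?_)
    obtain rfl : b = u :=
      hu.eq_of_le (mem_restrictSupportIdeal.1 hf b hb) (le_add_self.trans_eq hab)
    simpa using hab
  · simp

end MonomialIdeal

section LeadingExponents

variable {σ K : Type*} [Field K]

/-- The exponents of the leading monomials of the nonzero elements of `J`, i.e. the monomials of
the initial ideal of `J`. -/
def leadingExponents (m : MonomialOrder σ) (J : Ideal (MvPolynomial σ K)) : Set (σ →₀ ℕ) :=
  m.degree '' {f | f ∈ J ∧ f ≠ 0}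

theorem span_eq_of_forall_exists_degree_le (m : MonomialOrder σ) {J : Ideal (MvPolynomial σ K)}
    {B : Set (MvPolynomial σ K)} (hBJ : ∀ b ∈ B, b ∈ J ∧ b ≠ 0)
    (hB : ∀ f ∈ J, f ≠ 0 → ∃ b ∈ B, m.degree b ≤ m.degree f) : Ideal.span B = J := by
  have hle : Ideal.span B ≤ J := Ideal.span_le.2 fun b hb => (hBJ b hb).1
  refine le_antisymm hle fun f hf => ?_
  obtain ⟨c, r, hfr, -, hr⟩ := m.div_set
    (fun b hb => isUnit_iff_ne_zero.2 (m.leadingCoeff_ne_zero_iff.2 (hBJ b hb).2)) f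
  have hc : Finsupp.linearCombination _ (fun b : B => (b : MvPolynomial σ K)) c ∈ Ideal.span B :=
    Finsupp.mem_span_iff_linearCombination _ _ _ |>.2 ⟨c, rfl⟩
  have hr0 : r = 0 := by
    by_contra hr0
    have hrJ : r ∈ J := (Submodule.add_mem_iff_right J (hle hc)).1 (hfr ▸ hf)
    obtain ⟨b, hb, hbr⟩ := hB r hrJ hr0
    exact hr _ (m.degree_mem_support hr0) b hb hbr
  rwa [hfr, hr0, add_zero]

theorem subset_leadingExponents (m : MonomialOrder σ) {E : Set (σ →₀ ℕ)} (hE : IsUpperSet E)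
    {J : Ideal (MvPolynomial σ K)} (hJ : restrictSupportIdeal K E hE ≤ J) :
    E ⊆ leadingExponents m J := by
  classical
  exact fun u hu => ⟨monomial u 1, ⟨hJ (monomial_mem_restrictSupportIdeal hE hu 1), by simp⟩,
    by simp [m.degree_monomial]⟩

end LeadingExponents

section GeneratorCount

variable {σ K : Type*} [Finite σ] [Field K]

theorem finite_setOf_minimal (M : Set (σ →₀ ℕ)) : {u | Minimal (· ∈ M) u}.Finite :=
  WellQuasiOrderedLE.finite_of_isAntichain (setOfPred_minimal_antichain _)

-- The coefficients at the minimal exponents induce a surjection from the ideal onto a free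
-- module over the quotient by the irrelevant ideal, where the generators can be counted.
theorem ncard_minimal_le_spanFinrank {R : Type*} [CommRing R] [IsNoetherianRing R] [Nontrivial R]
    {E : Set (σ →₀ ℕ)} (hE : IsUpperSet E) :
    {u | Minimal (· ∈ E) u}.ncard ≤ (restrictSupportIdeal R E hE).spanFinrank := by
  classical
  set L := restrictSupportIdeal R E hE
  set G := {u | Minimal (· ∈ E) u}
  have : Fintype G := (finite_setOf_minimal E).fintype
  have : RingHomSurjective (constantCoeff : MvPolynomial σ R →+* R) :=
    ⟨fun r => ⟨C r, constantCoeff_C σ r⟩⟩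
  let minCoeff : L →ₛₗ[(constantCoeff : MvPolynomial σ R →+* R)] (G → R) :=
    { toFun f u := coeff u.1 f.1
      map_add' _ _ := rfl
      map_smul' p f := funext fun u => coeff_mul_of_minimal u.2 p f.2 }
  have hsurj : LinearMap.range minCoeff = ⊤ := by
    refine LinearMap.range_eq_top.2 fun g => ⟨⟨∑ u : G, monomial u.1 (g u), sum_mem fun u _ =>
      monomial_mem_restrictSupportIdeal hE u.2.1 _⟩, funext fun u => ?_⟩
    change coeff u.1 (∑ v : G, monomial v.1 (g v)) = g u
    simp [coeff_sum, coeff_monomial, ← Subtype.ext_iff]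
  calc G.ncard = Module.finrank R (G → R) := by
        rw [Module.finrank_fintype_fun_eq_card, Set.ncard_eq_toFinset_card', Set.toFinset_card]
    _ = ((⊤ : Submodule (MvPolynomial σ R) L).map minCoeff).spanFinrank := by
        rw [Submodule.map_top, hsurj, Module.finrank_eq_spanFinrank_of_free]
    _ ≤ (⊤ : Submodule (MvPolynomial σ R) L).spanFinrank :=
        Submodule.spanFinrank_map_le_of_fg _ (IsNoetherian.noetherian _)
    _ = L.spanFinrank := Submodule.spanFinrank_top _

theorem spanFinrank_le_ncard_minimal_leadingExponents (m : MonomialOrder σ)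
    (J : Ideal (MvPolynomial σ K)) :
    J.spanFinrank ≤ {u | Minimal (· ∈ leadingExponents m J) u}.ncard := by
  set G := {u | Minimal (· ∈ leadingExponents m J) u}
  have hG : G.Finite := finite_setOf_minimal _
  have hlift : ∀ u ∈ leadingExponents m J, ∃ f, (f ∈ J ∧ f ≠ 0) ∧ m.degree f = u := fun _ hu => hu
  choose! g hg hdeg using hlift
  have hspan : Ideal.span (g '' G) = J := by
    refine span_eq_of_forall_exists_degree_le m ?_ fun f hf hf0 => ?_
    · rintro _ ⟨u, hu, rfl⟩
      exact hg u hu.1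
    · obtain ⟨u, hle, hu⟩ := (Set.isPWO_of_wellQuasiOrderedLE (leadingExponents m J)
        ).exists_le_minimal ⟨f, ⟨hf, hf0⟩, rfl⟩
      exact ⟨g u, ⟨u, hu, rfl⟩, (hdeg u hu.1).trans_le hle⟩
  calc J.spanFinrank = (Ideal.span (g '' G)).spanFinrank := by rw [hspan]
    _ ≤ (g '' G).ncard := Submodule.spanFinrank_span_le_ncard_of_finite (hG.image g)
    _ ≤ G.ncard := Set.ncard_image_le hG

theorem spanFinrank_le_of_forall_ncard_minimal_le (m : MonomialOrder σ) {E : Set (σ →₀ ℕ)}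
    (hE : IsUpperSet E)
    (h : ∀ M, E ⊆ M → {u | Minimal (· ∈ M) u}.ncard ≤ {u | Minimal (· ∈ E) u}.ncard)
    {J : Ideal (MvPolynomial σ K)} (hJ : restrictSupportIdeal K E hE ≤ J) :
    J.spanFinrank ≤ (restrictSupportIdeal K E hE).spanFinrank :=
  calc J.spanFinrank
    _ ≤ {u | Minimal (· ∈ leadingExponents m J) u}.ncard :=
      spanFinrank_le_ncard_minimal_leadingExponents m J
    _ ≤ {u | Minimal (· ∈ E) u}.ncard := h _ (subset_leadingExponents m hE hJ)
    _ ≤ (restrictSupportIdeal K E hE).spanFinrank := ncard_minimal_le_spanFinrank hE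

end GeneratorCount

section Chains

variable {σ : Type*}

/-- One step along the chain through `u`: multiply the monomial `x^u` by the variable that `dir`
selects for it. -/
noncomputable def chainStep (dir : (σ →₀ ℕ) → σ) (u : σ →₀ ℕ) : σ →₀ ℕ :=
  u + Finsupp.single (dir u) 1

theorem degree_chainStep (dir : (σ →₀ ℕ) → σ) (u : σ →₀ ℕ) :
    (chainStep dir u).degree = u.degree + 1 := by
  simp [chainStep]

theorem degree_chainStep_iterate (dir : (σ →₀ ℕ) → σ) (n : ℕ) (u : σ →₀ ℕ) :
    ((chainStep dir)^[n] u).degree = u.degree + n := by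
  induction n with
  | zero => rfl
  | succ n ih => rw [Function.iterate_succ_apply', degree_chainStep, ih, add_assoc]

theorem le_chainStep_iterate (dir : (σ →₀ ℕ) → σ) (n : ℕ) (u : σ →₀ ℕ) :
    u ≤ (chainStep dir)^[n] u :=
  Function.id_le_iterate_of_id_le (fun _ => le_self_add) n u

variable {E : Set (σ →₀ ℕ)} {d : ℕ} {dir : (σ →₀ ℕ) → σ}

/-- The end of the chain from an exponent `u ∉ E` in degree `d`; exponents in `E` are kept. -/
noncomputable def chainEnd (E : Set (σ →₀ ℕ)) (d : ℕ) (dir : (σ →₀ ℕ) → σ) (u : σ →₀ ℕ) :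
    σ →₀ ℕ :=
  open Classical in if u ∈ E then u else (chainStep dir)^[d - u.degree] u

theorem chainEnd_of_mem {u : σ →₀ ℕ} (hu : u ∈ E) : chainEnd E d dir u = u :=
  if_pos hu

theorem chainEnd_of_notMem {u : σ →₀ ℕ} (hu : u ∉ E) :
    chainEnd E d dir u = (chainStep dir)^[d - u.degree] u :=
  if_neg hu

/-- The exponents outside `E` of degree less than `d` are matched into chains by `dir`, each of
which stays outside `E` up to degree `d`. -/
structure IsChainField (E : Set (σ →₀ ℕ)) (d : ℕ) (dir : (σ →₀ ℕ) → σ) : Prop where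
  chainStep_notMem : ∀ u ∉ E, u.degree < d → chainStep dir u ∉ E
  injOn : Set.InjOn (chainStep dir) {u | u ∉ E ∧ u.degree < d}

variable {M : Set (σ →₀ ℕ)}

theorem minimal_of_degree_eq (hE : IsUpperSet E) {u : σ →₀ ℕ} (hu : u ∉ E) (hd : u.degree = d) :
    Minimal (· ∈ E ∪ {u | d ≤ u.degree}) u := by
  refine ⟨Or.inr hd.ge, fun v hv hvu => ?_⟩
  obtain hv | hv := hv
  · exact absurd (hE hvu hv) hu
  · obtain ⟨w, rfl⟩ := exists_add_of_le hvu
    have hw : w.degree = 0 := by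
      rw [map_add] at hd
      have : d ≤ v.degree := hv
      lia
    rw [(Finsupp.degree_eq_zero_iff w).1 hw, add_zero]

theorem degree_le_of_minimal (hM : {u | d ≤ u.degree} ⊆ M) {u : σ →₀ ℕ}
    (hu : Minimal (· ∈ M) u) : u.degree ≤ d := by
  by_contra! hd
  obtain ⟨v, hvu, hv⟩ := Finsupp.exists_le_degree_eq u d hd.le
  rw [← hu.eq_of_le (hM hv.ge) hvu, hv] at hd
  exact hd.false

namespace IsChainField

theorem iterate_notMem (h : IsChainField E d dir) {u : σ →₀ ℕ} (hu : u ∉ E) {n : ℕ}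
    (hn : u.degree + n ≤ d) : (chainStep dir)^[n] u ∉ E := by
  induction n with
  | zero => exact hu
  | succ n ih =>
    rw [Function.iterate_succ_apply']
    refine h.chainStep_notMem _ (ih (by lia)) ?_
    rw [degree_chainStep_iterate]
    lia

theorem iterate_injOn (h : IsChainField E d dir) (n : ℕ) :
    Set.InjOn (chainStep dir)^[n] {u | u ∉ E ∧ u.degree + n ≤ d} := by
  induction n with
  | zero => exact Function.injective_id.injOn
  | succ n ih =>
    intro u hu v hv huv
    rw [Function.iterate_succ_apply, Function.iterate_succ_apply] at huv
    have hmem : ∀ w ∈ {w | w ∉ E ∧ w.degree + (n + 1) ≤ d},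
        chainStep dir w ∈ {w | w ∉ E ∧ w.degree + n ≤ d} := fun w hw =>
      ⟨h.chainStep_notMem w hw.1 (by have := hw.2; lia), by
        rw [degree_chainStep]; have := hw.2; lia⟩
    exact h.injOn ⟨hu.1, by have := hu.2; lia⟩ ⟨hv.1, by have := hv.2; lia⟩
      (ih (hmem u hu) (hmem v hv) huv)

theorem chainEnd_notMem (h : IsChainField E d dir) {u : σ →₀ ℕ} (hu : u ∉ E) (hd : u.degree ≤ d) :
    chainEnd E d dir u ∉ E := by
  rw [chainEnd_of_notMem hu]
  exact h.iterate_notMem hu (by lia)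

theorem minimal_chainEnd (h : IsChainField E d dir) (hE : IsUpperSet E)
    (hM : E ∪ {u | d ≤ u.degree} ⊆ M) {u : σ →₀ ℕ} (hu : Minimal (· ∈ M) u) :
    Minimal (· ∈ E ∪ {u | d ≤ u.degree}) (chainEnd E d dir u) := by
  by_cases huE : u ∈ E
  · rw [chainEnd_of_mem huE]
    exact hu.mono (fun _ hv => hM hv) (Or.inl huE)
  · have hd := degree_le_of_minimal (Set.subset_union_right.trans hM) hu
    refine minimal_of_degree_eq hE (h.chainEnd_notMem huE hd) ?_
    rw [chainEnd_of_notMem huE, degree_chainStep_iterate]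
    lia

theorem le_of_chainEnd_eq (h : IsChainField E d dir) {u v : σ →₀ ℕ} (hu : u ∉ E) (hv : v ∉ E)
    (hvd : v.degree ≤ d) (huv : u.degree ≤ v.degree)
    (heq : chainEnd E d dir u = chainEnd E d dir v) : u ≤ v := by
  have hsplit : d - u.degree = (d - v.degree) + (v.degree - u.degree) := by lia
  rw [chainEnd_of_notMem hu, chainEnd_of_notMem hv, hsplit, Function.iterate_add_apply] at heq
  have hmeet : (chainStep dir)^[v.degree - u.degree] u = v := by
    refine h.iterate_injOn _ ⟨h.iterate_notMem hu (by lia), ?_⟩ ⟨hv, by lia⟩ heq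
    rw [degree_chainStep_iterate]
    lia
  exact hmeet ▸ le_chainStep_iterate dir _ u

theorem injOn_chainEnd (h : IsChainField E d dir) (hM : {u | d ≤ u.degree} ⊆ M) :
    Set.InjOn (chainEnd E d dir) {u | Minimal (· ∈ M) u} := by
  intro u hu v hv huv
  have hud := degree_le_of_minimal hM hu
  have hvd := degree_le_of_minimal hM hv
  by_cases huE : u ∈ E <;> by_cases hvE : v ∈ E
  · rwa [chainEnd_of_mem huE, chainEnd_of_mem hvE] at huv
  · exact absurd (huv ▸ (chainEnd_of_mem huE).symm ▸ huE) (h.chainEnd_notMem hvE hvd)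
  · exact absurd (huv ▸ (chainEnd_of_mem hvE).symm ▸ hvE) (h.chainEnd_notMem huE hud)
  · obtain hle | hle := le_total u.degree v.degree
    · exact hv.eq_of_le hu.1 (h.le_of_chainEnd_eq huE hvE hvd hle huv)
    · exact (hu.eq_of_le hv.1 (h.le_of_chainEnd_eq hvE huE hud hle huv.symm)).symm

theorem ncard_minimal_le [Finite σ] (h : IsChainField E d dir) (hE : IsUpperSet E)
    (hM : E ∪ {u | d ≤ u.degree} ⊆ M) :
    {u | Minimal (· ∈ M) u}.ncard ≤ {u | Minimal (· ∈ E ∪ {u | d ≤ u.degree}) u}.ncard :=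
  Set.ncard_le_ncard_of_injOn _ (fun _ hu => h.minimal_chainEnd hE hM hu)
    (h.injOn_chainEnd (Set.subset_union_right.trans hM)) (finite_setOf_minimal _)

end IsChainField

end Chains

section AlmostCompleteIntersection

/-- The exponents of the monomials in `almostCI σ R k α`. -/
def almostCIExponents (σ : Type*) (k α : ℕ) : Set (σ →₀ ℕ) :=
  {u | (∃ i, k ≤ u i) ∨ ∀ i, α ≤ u i}

theorem isUpperSet_almostCIExponents {σ : Type*} {k α : ℕ} :
    IsUpperSet (almostCIExponents σ k α) := by
  rintro u v huv (⟨i, hi⟩ | h)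
  · exact Or.inl ⟨i, hi.trans (huv i)⟩
  · exact Or.inr fun i => (h i).trans (huv i)

variable {σ R : Type*} [Fintype σ] [CommSemiring R] {k α : ℕ}

variable (σ R k α) in
/-- The almost complete intersection generated by the `k`-th powers of the variables and the
`α`-th power of their product. -/
noncomputable def almostCI : Ideal (MvPolynomial σ R) :=
  Ideal.span (insert (∏ i, X i ^ α) (Set.range fun i => X i ^ k))

theorem almostCI_eq_restrictSupportIdeal :
    almostCI σ R k α =
      restrictSupportIdeal R (almostCIExponents σ k α) isUpperSet_almostCIExponents := by
  have hprod : ∏ i, (X i : MvPolynomial σ R) ^ α =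
      monomial (Finsupp.equivFunOnFinite.symm fun _ => α) 1 := by
    simp [monomial_eq, Finsupp.prod_fintype]
  have himage : insert (∏ i, X i ^ α) (Set.range fun i => (X i : MvPolynomial σ R) ^ k) =
      (fun u => monomial u 1) '' insert (Finsupp.equivFunOnFinite.symm fun _ => α)
        (Set.range fun i => Finsupp.single i k) := by
    rw [hprod, Set.image_insert_eq, ← Set.range_comp']
    simp only [X_pow_eq_monomial]
  ext f
  simp only [almostCI, himage, mem_ideal_span_monomial_image, mem_restrictSupportIdeal,
    almostCIExponents, Set.exists_mem_insert, Set.exists_range_iff, Finsupp.single_le_iff,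
    Set.mem_ofPred_eq]
  exact forall₂_congr fun u _ => or_comm

theorem degree_of_minimal_almostCIExponents {u : σ →₀ ℕ}
    (hu : Minimal (· ∈ almostCIExponents σ k α) u) :
    u.degree = k ∨ u.degree = Fintype.card σ * α := by
  obtain ⟨i, hi⟩ | h := hu.1
  · left
    have hmem : Finsupp.single i k ∈ almostCIExponents σ k α := Or.inl ⟨i, by simp⟩
    rw [← hu.eq_of_le hmem (Finsupp.single_le_iff.2 hi), Finsupp.degree_single]
  · right
    have hmem : Finsupp.equivFunOnFinite.symm (fun _ => α) ∈ almostCIExponents σ k α :=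
      Or.inr fun i => by simp
    rw [← hu.eq_of_le hmem h, Finsupp.degree_eq_sum]
    simp

theorem almostCI_add_pow_eq_restrictSupportIdeal (d : ℕ) :
    almostCI σ R k α + idealOfVars σ R ^ d =
      restrictSupportIdeal R (almostCIExponents σ k α ∪ {u | d ≤ u.degree})
        (isUpperSet_almostCIExponents.union ((isUpperSet_Ici d).preimage Finsupp.degree_mono)) := by
  rw [almostCI_eq_restrictSupportIdeal, pow_idealOfVars, Submodule.add_eq_sup,
    ← restrictSupportIdeal_union]
  rfl

end AlmostCompleteIntersection

section ThreeVariables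

variable {k α : ℕ}

theorem almostCI_fin_three {R : Type*} [CommSemiring R] : almostCI (Fin 3) R k α =
    Ideal.span {X 0 ^ k, X 1 ^ k, X 2 ^ k, X 0 ^ α * X 1 ^ α * X 2 ^ α} := by
  rw [almostCI, Fin.prod_univ_three]
  congr 1
  ext f
  simp [Fin.exists_fin_succ, eq_comm, or_comm, or_assoc]

theorem mem_almostCIExponents_fin_three {u : Fin 3 →₀ ℕ} :
    u ∈ almostCIExponents (Fin 3) k α ↔
      k ≤ u 0 ∨ k ≤ u 1 ∨ k ≤ u 2 ∨ (α ≤ u 0 ∧ α ≤ u 1 ∧ α ≤ u 2) := by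
  simp [almostCIExponents, Fin.exists_fin_succ, Fin.forall_fin_succ, or_assoc]

theorem degree_fin_three (u : Fin 3 →₀ ℕ) : u.degree = u 0 + u 1 + u 2 := by
  rw [Finsupp.degree_eq_sum, Fin.sum_univ_three]

/-- The variable along which the chain through `x^u` continues in three variables. In degree at most
`k + α - 1`, an entry can only reach `k` while the others stay below `α`; hence raising one entry is
safe while the other two lie on either side of `α`. If only `u 0` may reach `α`, the chain first
raises `u 0` until `u 0 + u 1 = k - 1`, and then `u 1`. -/
def chainDir (k α : ℕ) (u : Fin 3 →₀ ℕ) : Fin 3 :=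
  if u 0 < α ∧ α ≤ u 1 then 2
  else if u 2 < α ∧ (α ≤ u 1 ∨ k ≤ u 0 + u 1 + 1) then 1
  else 0

theorem isChainField_chainDir (hkα : 2 * α ≤ k) :
    IsChainField (almostCIExponents (Fin 3) k α) (k + α - 1) (chainDir k α) where
  chainStep_notMem u hu hd := by
    rw [degree_fin_three] at hd
    rw [mem_almostCIExponents_fin_three] at hu ⊢
    unfold chainStep chainDir
    split_ifs <;>
    simp only [Finsupp.add_apply, Finsupp.single_apply, Fin.reduceEq, if_true, if_false] <;> lia
  injOn u hu v hv huv := by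
    obtain ⟨hu, hud⟩ := hu
    obtain ⟨hv, hvd⟩ := hv
    rw [mem_almostCIExponents_fin_three] at hu hv
    rw [degree_fin_three] at hud hvd
    simp only [Finsupp.ext_iff, Fin.forall_fin_succ] at huv ⊢
    unfold chainStep chainDir at huv
    split_ifs at huv <;>
    simp only [Finsupp.add_apply, Finsupp.single_apply, Fin.reduceEq, if_true, if_false,
      Fin.succ_zero_eq_one, Fin.succ_one_eq_two, Fin.forall_fin_zero, and_true] at huv ⊢ <;> lia

end ThreeVariables

section HomogeneousPolynomials

variable {σ R : Type*} [CommSemiring R] {d : ℕ}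

theorem degree_eq_of_mem_support_of_isHomogeneous {F : MvPolynomial σ R} (hF : F.IsHomogeneous d)
    {u : σ →₀ ℕ} (hu : u ∈ F.support) : u.degree = d :=
  by_contra fun h => mem_support_iff.1 hu (hF.coeff_eq_zero h)

theorem mem_pow_idealOfVars_of_isHomogeneous {F : MvPolynomial σ R} (hF : F.IsHomogeneous d) :
    F ∈ idealOfVars σ R ^ d :=
  (mem_pow_idealOfVars_iff' d F).2 fun _ hu => hF.coeff_eq_zero hu.ne

/-- Multiplication by `l` is injective on the degree `d` part of `S/I`, for a polynomial ring `S`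
and a homogeneous ideal `I`. -/
def MulInjectiveInDegree (I : Ideal (MvPolynomial σ R)) (d : ℕ) (l : MvPolynomial σ R) : Prop :=
  ∀ F : MvPolynomial σ R, F.IsHomogeneous d → l * F ∈ I → F ∈ I

theorem isHomogeneous_sum_C_mul_X [Fintype σ] (w : σ → R) :
    (∑ i, C (w i) * X i).IsHomogeneous 1 :=
  .sum _ _ _ fun i _ => isHomogeneous_C_mul_X (w i) i

end HomogeneousPolynomials

section FullIdeals

variable {σ R : Type*} [Fintype σ] [CommRing R] {d : ℕ}

theorem exists_sub_sum_C_mul_X_mem_idealOfVars_sq {y : MvPolynomial σ R}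
    (hy : y ∈ idealOfVars σ R) : ∃ w : σ → R, y - ∑ i, C (w i) * X i ∈ idealOfVars σ R ^ 2 := by
  obtain ⟨a, rfl⟩ := Ideal.mem_span_range_iff_exists_fun.1 hy
  refine ⟨fun i => constantCoeff (a i), ?_⟩
  simp only [← Finset.sum_sub_distrib, ← sub_mul, sq]
  refine sum_mem fun i _ => Ideal.mul_mem_mul ?_ (Ideal.subset_span ⟨i, rfl⟩)
  rw [← pow_one (idealOfVars σ R), mem_pow_idealOfVars_iff']
  intro u hu
  rw [(Finsupp.degree_eq_zero_iff u).1 (Nat.lt_one_iff.1 hu), coeff_sub, coeff_zero_C,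
    constantCoeff_eq, sub_self]

theorem not_isMFull_of_forall_linear {L : Ideal (MvPolynomial σ R)}
    (hL : idealOfVars σ R ^ (d + 1) ≤ L)
    (h : ∀ w : σ → R, ∃ F ∈ idealOfVars σ R ^ d,
      F ∉ L ∧ (∑ i, C (w i) * X i) * F ∈ idealOfVars σ R * L) :
    ¬ IsMFull (idealOfVars σ R) L := by
  rintro ⟨y, hy, hcolon⟩
  obtain ⟨w, hw⟩ := exists_sub_sum_C_mul_X_mem_idealOfVars_sq hy
  obtain ⟨F, hF, hFL, hlF⟩ := h w
  have hrest : (y - ∑ i, C (w i) * X i) * F ∈ idealOfVars σ R * L := by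
    have hmem := Ideal.mul_mem_mul hw hF
    rw [sq, mul_assoc, ← pow_succ'] at hmem
    exact Ideal.mul_mono_right hL hmem
  refine hFL (hcolon ▸ Ideal.mem_colon_span_singleton.2 ?_)
  rw [mul_comm F, ← sub_add_cancel y (∑ i, C (w i) * X i), add_mul]
  exact add_mem hrest hlF

theorem not_isMFull_of_not_mulInjectiveInDegree {E : Set (σ →₀ ℕ)} (hE : IsUpperSet E)
    (hmin : ∀ u, Minimal (· ∈ E) u → u.degree ≠ d + 1)
    (h : ∀ w : σ → R, ¬ MulInjectiveInDegree (restrictSupportIdeal R E hE) d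
      (∑ i, C (w i) * X i)) :
    ¬ IsMFull (idealOfVars σ R) (restrictSupportIdeal R E hE + idealOfVars σ R ^ (d + 1)) := by
  refine not_isMFull_of_forall_linear (d := d) le_add_self fun w => ?_
  obtain ⟨F, hF, hlF, hFE⟩ : ∃ F : MvPolynomial σ R, F.IsHomogeneous d ∧
      (∑ i, C (w i) * X i) * F ∈ restrictSupportIdeal R E hE ∧ F ∉ restrictSupportIdeal R E hE := by
    simpa [MulInjectiveInDegree] using h w
  refine ⟨F, mem_pow_idealOfVars_of_isHomogeneous hF, fun hFL => hFE fun u hu => ?_, ?_⟩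
  · rw [pow_idealOfVars, Submodule.add_eq_sup, ← restrictSupportIdeal_union] at hFL
    refine (hFL hu).resolve_right fun hd => ?_
    rw [Set.mem_preimage, Set.mem_Ici, degree_eq_of_mem_support_of_isHomogeneous hF hu] at hd
    lia
  · refine Ideal.mul_mono_right le_self_add ?_
    rw [((∑ i, C (w i) * X i) * F).as_sum]
    refine sum_mem fun u hu => monomial_mem_idealOfVars_mul_of_not_minimal hE (hlF hu)
      (fun hu' => hmin u hu' ?_) _
    rw [degree_eq_of_mem_support_of_isHomogeneous ((isHomogeneous_sum_C_mul_X w).mul hF) hu,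
      add_comm]

end FullIdeals

section MonomialSubstitution

variable {σ R : Type*} [CommSemiring R]

theorem MulInjectiveInDegree.of_algHom {I : Ideal (MvPolynomial σ R)} {d : ℕ}
    {l : MvPolynomial σ R} (θ θ' : MvPolynomial σ R →ₐ[R] MvPolynomial σ R)
    (hθθ' : Function.LeftInverse θ' θ) (hθ : ∀ i, (θ (X i)).IsHomogeneous 1) (hI : I ≤ I.comap θ)
    (hI' : I ≤ I.comap θ') (h : MulInjectiveInDegree I d (θ l)) : MulInjectiveInDegree I d l := by
  intro F hF hlF
  have hhom : (θ F).IsHomogeneous d := by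
    have := hF.aeval (θ ∘ X) hθ
    rwa [one_mul, ← aeval_unique] at this
  have := hI' (h (θ F) hhom (map_mul θ l F ▸ hI hlF))
  rwa [Ideal.mem_comap, hθθ' F] at this

/-- The substitution `X i ↦ c i * X (π i)`, an automorphism that preserves `almostCI σ R k α` and
serves to normalize linear forms. -/
noncomputable def monomialSubst (c : σ → Rˣ) (π : Equiv.Perm σ) :
    MvPolynomial σ R →ₐ[R] MvPolynomial σ R :=
  aeval fun i => C (c i : R) * X (π i)

theorem monomialSubst_X (c : σ → Rˣ) (π : Equiv.Perm σ) (i : σ) :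
    monomialSubst c π (X i) = C (c i : R) * X (π i) :=
  aeval_X _ i

theorem leftInverse_monomialSubst (c : σ → Rˣ) (π : Equiv.Perm σ) :
    Function.LeftInverse (monomialSubst (fun i => (c (π.symm i))⁻¹) π.symm)
      (monomialSubst c π) := by
  refine DFunLike.congr_fun (f := (monomialSubst (fun i => (c (π.symm i))⁻¹) π.symm).comp
    (monomialSubst c π)) (g := AlgHom.id R _) (algHom_ext fun i => ?_)
  simp only [AlgHom.comp_apply, monomialSubst_X, map_mul, algHom_C, algebraMap_eq,
    Equiv.symm_apply_apply, AlgHom.id_apply]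
  rw [← mul_assoc, ← C_mul, Units.mul_inv, C_1, one_mul]

theorem almostCI_le_comap_monomialSubst [Fintype σ] (k α : ℕ) (c : σ → Rˣ) (π : Equiv.Perm σ) :
    almostCI σ R k α ≤ (almostCI σ R k α).comap (monomialSubst c π) := by
  refine Ideal.span_le.2 (Set.insert_subset ?_ ?_)
  · have hprod : monomialSubst c π (∏ i, X i ^ α) = (∏ i, C (c i : R) ^ α) * ∏ i, X i ^ α := by
      simp only [map_prod, map_pow, monomialSubst_X, mul_pow, Finset.prod_mul_distrib]
      rw [Equiv.prod_comp π fun i => (X i : MvPolynomial σ R) ^ α]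
    rw [SetLike.mem_coe, Ideal.mem_comap, hprod]
    exact Ideal.mul_mem_left _ _ (Ideal.subset_span (Set.mem_insert _ _))
  · rintro _ ⟨i, rfl⟩
    rw [SetLike.mem_coe, Ideal.mem_comap, map_pow, monomialSubst_X, mul_pow]
    exact Ideal.mul_mem_left _ _ (Ideal.subset_span (Set.mem_insert_of_mem _ ⟨π i, rfl⟩))

theorem MulInjectiveInDegree.of_monomialSubst [Fintype σ] {k α d : ℕ} {l : MvPolynomial σ R}
    (c : σ → Rˣ) (π : Equiv.Perm σ)
    (h : MulInjectiveInDegree (almostCI σ R k α) d (monomialSubst c π l)) :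
    MulInjectiveInDegree (almostCI σ R k α) d l :=
  h.of_algHom _ _ (leftInverse_monomialSubst c π)
    (fun i => by rw [monomialSubst_X]; exact isHomogeneous_C_mul_X _ _)
    (almostCI_le_comap_monomialSubst k α c π) (almostCI_le_comap_monomialSubst k α _ _)

end MonomialSubstitution

section OrbitSum

variable {σ R : Type*} [CommSemiring R]

/-- The sum of the monomials in the orbit of `x^u` under a variable permutation `τ` of order at
most two. -/
noncomputable def orbitSum [DecidableEq σ] (R : Type*) [CommSemiring R] (τ : Equiv.Perm σ)
    (u : σ →₀ ℕ) : MvPolynomial σ R :=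
  ∑ v ∈ {u, u.mapDomain τ}, monomial v 1

theorem coeff_orbitSum [DecidableEq σ] (τ : Equiv.Perm σ) (u v : σ →₀ ℕ) :
    coeff v (orbitSum R τ u) = if v = u ∨ v = u.mapDomain τ then 1 else 0 := by
  simp only [orbitSum, coeff_sum, coeff_monomial, Finset.sum_ite_eq', Finset.mem_insert,
    Finset.mem_singleton]

theorem isHomogeneous_orbitSum [DecidableEq σ] (τ : Equiv.Perm σ) (u : σ →₀ ℕ) :
    (orbitSum R τ u).IsHomogeneous u.degree := by
  refine .sum _ _ _ fun v hv => isHomogeneous_monomial _ ?_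
  obtain rfl | rfl : v = u ∨ v = u.mapDomain τ := by simpa using hv
  · rfl
  · exact Finsupp.degree_mapDomain _ _

theorem mapDomain_mapDomain_of_involutive {τ : Equiv.Perm σ} (hτ : Function.Involutive τ)
    (u : σ →₀ ℕ) : (u.mapDomain τ).mapDomain τ = u := by
  rw [← Finsupp.mapDomain_comp, hτ.comp_self, Finsupp.mapDomain_id]

theorem rename_orbitSum [DecidableEq σ] {τ : Equiv.Perm σ} (hτ : Function.Involutive τ)
    (u : σ →₀ ℕ) : rename τ (orbitSum R τ u) = orbitSum R τ u := by
  simp only [orbitSum, map_sum, rename_monomial]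
  by_cases hu : u.mapDomain τ = u
  · simp [hu]
  · rw [Finset.sum_pair (Ne.symm hu), Finset.sum_pair (Ne.symm hu),
      mapDomain_mapDomain_of_involutive hτ, add_comm]

theorem coeff_mapDomain_of_rename_eq {τ : Equiv.Perm σ} {F : MvPolynomial σ R}
    (hF : rename τ F = F) (u : σ →₀ ℕ) : coeff (u.mapDomain τ) F = coeff u F := by
  conv_lhs => rw [← hF]
  exact coeff_rename_mapDomain τ τ.injective F u

theorem coeff_sum_C_mul_orbitSum [DecidableEq σ] {τ : Equiv.Perm σ} {U : Finset (σ →₀ ℕ)}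
    (hU : ∀ u ∈ U, u.mapDomain τ ∈ U → u.mapDomain τ = u) (h : U → R) (u : U) :
    coeff u.1 (∑ v : U, C (h v) * orbitSum R τ v) = h u := by
  rw [coeff_sum, Finset.sum_eq_single u]
  · simp [coeff_C_mul, coeff_orbitSum]
  · intro v _ hvu
    rw [coeff_C_mul, coeff_orbitSum, if_neg, mul_zero]
    rintro (huv | huv)
    · exact hvu (Subtype.ext huv.symm)
    · exact hvu (Subtype.ext (huv.trans (hU v v.2 (huv ▸ u.2))).symm)
  · simp

variable {K : Type*} [Field K]

theorem exists_forall_coeff_mul_sum_orbitSum_eq_zero [DecidableEq σ] (τ : Equiv.Perm σ)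
    {U V : Finset (σ →₀ ℕ)} (hUV : V.card < U.card) (l : MvPolynomial σ K) :
    ∃ h : U → K, h ≠ 0 ∧ ∀ v ∈ V, coeff v (l * ∑ u : U, C (h u) * orbitSum K τ u) = 0 := by
  let T : (U → K) →ₗ[K] V → K :=
    LinearMap.pi fun v => (lcoeff K v.1 ∘ₗ LinearMap.mulLeft K l) ∘ₗ
      Fintype.linearCombination K fun u : U => orbitSum K τ u
  have hker : LinearMap.ker T ≠ ⊥ := LinearMap.ker_ne_bot_of_finrank_lt (by simpa using hUV)
  obtain ⟨h, hh, hh0⟩ := Submodule.exists_mem_ne_zero_of_ne_bot hker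
  refine ⟨h, hh0, fun v hv => ?_⟩
  have := congrFun hh ⟨v, hv⟩
  simpa only [T, LinearMap.pi_apply, LinearMap.comp_apply, Fintype.linearCombination_apply,
    LinearMap.mulLeft_apply, lcoeff_apply, C_mul', Pi.zero_apply] using this

theorem not_mulInjectiveInDegree_of_card_lt {E : Set (σ →₀ ℕ)} (hE : IsUpperSet E) {d : ℕ}
    {τ : Equiv.Perm σ} (hτ : Function.Involutive τ) {l : MvPolynomial σ K}
    (hl : l.IsHomogeneous 1) (hlτ : rename τ l = l) {U V : Finset (σ →₀ ℕ)}
    (hUE : ∀ u ∈ U, u ∉ E ∧ u.degree = d)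
    (hU : ∀ u ∈ U, u.mapDomain τ ∈ U → u.mapDomain τ = u)
    (hV : ∀ v ∉ E, v.degree = d + 1 → v ∈ V ∨ v.mapDomain τ ∈ V) (hUV : V.card < U.card) :
    ¬ MulInjectiveInDegree (restrictSupportIdeal K E hE) d l := by
  classical
  obtain ⟨h, hh, hcoeff⟩ := exists_forall_coeff_mul_sum_orbitSum_eq_zero τ hUV l
  set F := ∑ u : U, C (h u) * orbitSum K τ u with hF
  have hFd : F.IsHomogeneous d := .sum _ _ _ fun u _ =>
    .C_mul ((hUE u.1 u.2).2 ▸ isHomogeneous_orbitSum τ u.1) _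
  have hτF : rename τ (l * F) = l * F := by
    simp only [hF, map_mul, hlτ, map_sum, rename_C, rename_orbitSum hτ]
  have hlF : l * F ∈ restrictSupportIdeal K E hE := by
    intro v hv
    by_contra hvE
    have hdeg : v.degree = d + 1 :=
      (degree_eq_of_mem_support_of_isHomogeneous (hl.mul hFd) hv).trans (add_comm 1 d)
    refine mem_support_iff.1 hv (?_ : coeff v (l * F) = 0)
    obtain hv' | hv' := hV v hvE hdeg
    · exact hcoeff v hv'
    · rw [← coeff_mapDomain_of_rename_eq hτF, hcoeff _ hv']
  obtain ⟨u, hu⟩ := Function.ne_iff.1 hh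
  exact fun hinj => (hUE u u.2).1 (hinj F hFd hlF
    (mem_support_iff.2 ((coeff_sum_C_mul_orbitSum hU h u).trans_ne hu)))

end OrbitSum

section SymmetricForms

variable {k α : ℕ}

theorem exists_units_ite_mul_eq {ι K : Type*} [Field K] (w : ι → K) [DecidablePred (w · = 0)] :
    ∃ c : ι → Kˣ, ∀ i, (if w i = 0 then 0 else 1) * (c i : K) = w i := by
  refine ⟨fun i => if h : w i = 0 then 1 else Units.mk0 (w i) h, fun i => ?_⟩
  by_cases h : w i = 0 <;> simp [h]

theorem exists_perm_iff_fin_three (p : Fin 3 → Prop) :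
    ∃ π : Equiv.Perm (Fin 3), p (π 0) ↔ p (π 1) := by
  have hperm : ∀ i j : Fin 3, i ≠ j → ∃ π : Equiv.Perm (Fin 3), π 0 = i ∧ π 1 = j := by decide
  obtain ⟨i, j, hij, hp⟩ := Fintype.exists_ne_map_eq_of_card_lt p (by simp)
  obtain ⟨π, rfl, rfl⟩ := hperm i j hij
  exact ⟨π, hp.to_iff⟩

theorem exists_monomialSubst_eq_sum_C_mul_X_fin_three {K : Type*} [Field K] (w : Fin 3 → K) :
    ∃ (c : Fin 3 → Kˣ) (π : Equiv.Perm (Fin 3)) (v : Fin 3 → K), v 0 = v 1 ∧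
      monomialSubst c π (∑ i, C (v i) * X i) = ∑ i, C (w i) * X i := by
  classical
  obtain ⟨π, hπ⟩ := exists_perm_iff_fin_three (w · = 0)
  obtain ⟨c, hc⟩ := exists_units_ite_mul_eq (w ∘ π)
  refine ⟨c, π, fun i => if w (π i) = 0 then 0 else 1, if_congr hπ rfl rfl, ?_⟩
  rw [← Equiv.sum_comp π fun i => C (w i) * X i]
  simp only [map_sum, map_mul, algHom_C, algebraMap_eq, monomialSubst_X]
  refine Finset.sum_congr rfl fun i _ => ?_
  rw [← mul_assoc, ← C_mul]
  exact congrArg (C · * X (π i)) (hc i)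

/-- Representatives, up to exchanging the first two variables, of the monomials of degree `n`
outside `almostCI (Fin 3) R k α`. Their orbit sums span the
invariants of the quotient in degree `n`. -/
noncomputable def swapReps (k α n : ℕ) : Finset (Fin 3 →₀ ℕ) :=
  open Classical in
  {u ∈ Finset.finsuppAntidiag Finset.univ n | u ∉ almostCIExponents (Fin 3) k α ∧ u 0 ≤ u 1}

theorem mem_swapReps {n : ℕ} {u : Fin 3 →₀ ℕ} : u ∈ swapReps k α n ↔
    u 0 + u 1 + u 2 = n ∧ u ∉ almostCIExponents (Fin 3) k α ∧ u 0 ≤ u 1 := by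
  simp [swapReps, Finset.mem_finsuppAntidiag, Fin.sum_univ_three]

/-- The exponent of the monomial `x₀^a x₁^b x₂^c`. -/
noncomputable def expVec (a b c : ℕ) : Fin 3 →₀ ℕ :=
  Finsupp.equivFunOnFinite.symm ![a, b, c]

@[simp]
theorem expVec_zero (a b c : ℕ) : expVec a b c 0 = a := rfl

@[simp]
theorem expVec_one (a b c : ℕ) : expVec a b c 1 = b := rfl

@[simp]
theorem expVec_two (a b c : ℕ) : expVec a b c 2 = c := rfl

theorem expVec_inj {a b c a' b' c' : ℕ} :
    expVec a b c = expVec a' b' c' ↔ a = a' ∧ b = b' ∧ c = c' := by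
  simp [expVec]

/-- For odd `k` and `α`, an injection of `swapReps k α (k + α - 1)` into
`swapReps k α (k + α - 2)`. Off the diagonal `u 0 = u 1` it lowers `u 1`, and so never reaches the
second entry `k - 1`. On the diagonal `u 2` is odd, and the image has second entry `k - 1` and a
third entry that is odd if `u 2 < α` and even otherwise. The exponent `(0, k - 1, α - 1)` is left
out. -/
noncomputable def swapRepsLower (k α : ℕ) (u : Fin 3 →₀ ℕ) : Fin 3 →₀ ℕ :=
  if u 0 < u 1 then expVec (u 0) (u 1 - 1) (u 2)
  else if u 2 < α then expVec (α - 1 - u 2) (k - 1) (u 2)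
  else expVec (k - u 2) (k - 1) (u 2 + α - (k + 1))

theorem mapsTo_swapRepsLower (hk : Odd k) (hα : Odd α) :
    Set.MapsTo (swapRepsLower k α) (swapReps k α (k + α - 1))
      ((swapReps k α (k + α - 2)).erase (expVec 0 (k - 1) (α - 1))) := by
  intro u hu
  obtain ⟨a, rfl⟩ := hk
  obtain ⟨b, rfl⟩ := hα
  simp only [SetLike.mem_coe, Finset.mem_erase, mem_swapReps, mem_almostCIExponents_fin_three]
    at hu ⊢
  unfold swapRepsLower
  split_ifs <;>
    simp only [ne_eq, expVec_inj, expVec_zero, expVec_one, expVec_two] <;> lia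

theorem injOn_swapRepsLower (hk : Odd k) (hα : Odd α) :
    Set.InjOn (swapRepsLower k α) (swapReps k α (k + α - 1)) := by
  intro u hu v hv huv
  obtain ⟨a, rfl⟩ := hk
  obtain ⟨b, rfl⟩ := hα
  simp only [SetLike.mem_coe, mem_swapReps, mem_almostCIExponents_fin_three] at hu hv
  unfold swapRepsLower at huv
  simp only [Finsupp.ext_iff, Fin.forall_fin_succ]
  split_ifs at huv <;> rw [expVec_inj] at huv <;>
    simp only [Fin.succ_zero_eq_one, Fin.succ_one_eq_two, Fin.forall_fin_zero, and_true] <;> lia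

theorem card_swapReps_lt (hk : Odd k) (hα : Odd α) (hαk : α ≤ k) :
    (swapReps k α (k + α - 1)).card < (swapReps k α (k + α - 2)).card := by
  have hmem : expVec 0 (k - 1) (α - 1) ∈ swapReps k α (k + α - 2) := by
    have := hk.pos
    have := hα.pos
    simp only [mem_swapReps, mem_almostCIExponents_fin_three, expVec_zero, expVec_one, expVec_two]
    lia
  exact (Finset.card_le_card_of_injOn _ (mapsTo_swapRepsLower hk hα)
    (injOn_swapRepsLower hk hα)).trans_lt (Finset.card_erase_lt_of_mem hmem)

theorem mapDomain_swap_fin_three (u : Fin 3 →₀ ℕ) :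
    u.mapDomain (Equiv.swap 0 1) = expVec (u 1) (u 0) (u 2) := by
  ext i
  rw [Finsupp.mapDomain_equiv_apply]
  fin_cases i <;> rfl

theorem rename_swap_sum_C_mul_X {σ R : Type*} [Fintype σ] [DecidableEq σ] [CommSemiring R] {i j : σ}
    {v : σ → R} (hv : v i = v j) :
    rename (Equiv.swap i j) (∑ m, C (v m) * X m) = ∑ m, C (v m) * X m := by
  conv_rhs => rw [← Equiv.sum_comp (Equiv.swap i j) fun m => C (v m) * X m]
  simp only [map_sum, map_mul, rename_C, rename_X, Equiv.apply_swap_eq_self hv]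

theorem not_mulInjectiveInDegree_of_apply_zero_eq {K : Type*} [Field K] (hk : Odd k) (hα : Odd α)
    (hαk : α ≤ k) {v : Fin 3 → K} (hv : v 0 = v 1) :
    ¬ MulInjectiveInDegree (almostCI (Fin 3) K k α) (k + α - 2) (∑ i, C (v i) * X i) := by
  have := hk.pos
  have := hα.pos
  rw [almostCI_eq_restrictSupportIdeal]
  refine not_mulInjectiveInDegree_of_card_lt (τ := Equiv.swap 0 1)
    (U := swapReps k α (k + α - 2)) (V := swapReps k α (k + α - 1)) _
    (Equiv.swap_apply_self 0 1) (isHomogeneous_sum_C_mul_X v) (rename_swap_sum_C_mul_X hv)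
    ?_ ?_ ?_ (card_swapReps_lt hk hα hαk)
  · intro u hu
    rw [mem_swapReps] at hu
    exact ⟨hu.2.1, (degree_fin_three u).trans hu.1⟩
  · intro u hu hu'
    rw [mapDomain_swap_fin_three] at hu' ⊢
    simp only [mem_swapReps, expVec_zero, expVec_one] at hu hu'
    have : u 0 = u 1 := by lia
    ext i
    fin_cases i <;> simp [this]
  · intro u hu hud
    rw [degree_fin_three] at hud
    rw [mem_almostCIExponents_fin_three] at hu
    simp only [mapDomain_swap_fin_three, mem_swapReps, mem_almostCIExponents_fin_three, expVec_zero,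
      expVec_one, expVec_two]
    omega

theorem not_mulInjectiveInDegree_almostCI {K : Type*} [Field K] (hk : Odd k) (hα : Odd α)
    (hαk : α ≤ k) (w : Fin 3 → K) :
    ¬ MulInjectiveInDegree (almostCI (Fin 3) K k α) (k + α - 2) (∑ i, C (w i) * X i) := by
  obtain ⟨c, π, v, hv, hsubst⟩ := exists_monomialSubst_eq_sum_C_mul_X_fin_three w
  exact fun h => not_mulInjectiveInDegree_of_apply_zero_eq hk hα hαk hv
    (.of_monomialSubst c π (hsubst ▸ h))

end SymmetricForms

section ReesAndNotFull

variable {K : Type*} [Field K] {k α : ℕ}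

theorem spanFinrank_le_of_almostCI_add_pow_le (hkα : 2 * α ≤ k) {J : Ideal (MvPolynomial (Fin 3) K)}
    (hJ : almostCI (Fin 3) K k α + idealOfVars (Fin 3) K ^ (k + α - 1) ≤ J) :
    J.spanFinrank ≤
      (almostCI (Fin 3) K k α + idealOfVars (Fin 3) K ^ (k + α - 1)).spanFinrank := by
  rw [almostCI_add_pow_eq_restrictSupportIdeal] at hJ ⊢
  exact spanFinrank_le_of_forall_ncard_minimal_le MonomialOrder.lex _
    (fun _ => (isChainField_chainDir hkα).ncard_minimal_le isUpperSet_almostCIExponents) hJ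

theorem not_isMFull_almostCI_add_pow (hk : Odd k) (hα : Odd α) (hαk : α ≤ k) (hα1 : α ≠ 1)
    (hkα : k ≠ 2 * α + 1) : ¬ IsMFull (idealOfVars (Fin 3) K)
      (almostCI (Fin 3) K k α + idealOfVars (Fin 3) K ^ (k + α - 1)) := by
  have hd : k + α - 1 = k + α - 2 + 1 := by
    have := hk.pos
    have := hα.pos
    lia
  have hinj := not_mulInjectiveInDegree_almostCI (K := K) hk hα hαk
  rw [almostCI_eq_restrictSupportIdeal] at hinj ⊢
  rw [hd]
  refine not_isMFull_of_not_mulInjectiveInDegree _ (fun u hu => ?_) hinj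
  have := degree_of_minimal_almostCIExponents hu
  rw [Fintype.card_fin] at this
  lia

end ReesAndNotFull

theorem stmt12_general {K : Type*} [Field K] (k α : ℕ) :
    (2 * α ≤ k → ∀ J : Ideal (MvPolynomial (Fin 3) K),
        Ideal.span {X 0 ^ k, X 1 ^ k, X 2 ^ k, X 0 ^ α * X 1 ^ α * X 2 ^ α}
          + mm K 3 ^ (k + α - 1) ≤ J →
        mu J ≤ mu (Ideal.span {X 0 ^ k, X 1 ^ k, X 2 ^ k, X 0 ^ α * X 1 ^ α * X 2 ^ α}
          + mm K 3 ^ (k + α - 1)))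
    ∧ (Odd k → Odd α → α ≤ k → α ≠ 1 → k ≠ 2 * α + 1 → ¬ IsMFull (mm K 3)
        (Ideal.span {X 0 ^ k, X 1 ^ k, X 2 ^ k, X 0 ^ α * X 1 ^ α * X 2 ^ α}
          + mm K 3 ^ (k + α - 1))) := by
  simp only [mm_eq_idealOfVars, ← almostCI_fin_three, mu_eq_spanFinrank]
  exact ⟨fun hkα _ => spanFinrank_le_of_almostCI_add_pow_le hkα, not_isMFull_almostCI_add_pow⟩

/-- For odd integers `k ≥ 2α+3` and `α ≥ 3`, the ideal
`(x₁^k, x₂^k, x₃^k, x₁^α x₂^α x₃^α) + m^{k+α-1}` of `K[x₁,x₂,x₃]`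
has the Rees property but is not `m`-full. -/
theorem stmt12 {K : Type*} [Field K] (k α : ℕ) (hkodd : Odd k) (hαodd : Odd α)
    (hkα : 2 * α + 3 ≤ k) (hα : 3 ≤ α) :
    (∀ J : Ideal (MvPolynomial (Fin 3) K), IsHomog J →
        Ideal.span {X 0 ^ k, X 1 ^ k, X 2 ^ k, X 0 ^ α * X 1 ^ α * X 2 ^ α}
          + mm K 3 ^ (k + α - 1) ≤ J →
        mu J ≤ mu (Ideal.span {X 0 ^ k, X 1 ^ k, X 2 ^ k, X 0 ^ α * X 1 ^ α * X 2 ^ α}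
          + mm K 3 ^ (k + α - 1)))
    ∧ ¬ IsMFull (mm K 3)
        (Ideal.span {X 0 ^ k, X 1 ^ k, X 2 ^ k, X 0 ^ α * X 1 ^ α * X 2 ^ α}
          + mm K 3 ^ (k + α - 1)) := by
  obtain ⟨hrees, hfull⟩ := stmt12_general (K := K) k α
  exact ⟨fun J _ => hrees (by lia) J,
    hfull hkodd hαodd (by lia) (by lia) (by lia)⟩
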